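/- arXiv:1001.2457 — 4 statements merged into one kernel-verified Lean document; each statement's English description precedes it below -/
import Mathlib

section
/- Let H be a nonzero additive subgroup of ℚ. Then every cellular exact sequence 0 → F → G → H → 0 of abelian groups in which the kernel F is a free abelian group is trivial, i.e. F = 0. -/
/-!
After rescaling, `1 ∈ H`, and the sequence is encoded by `π : G →+ ℚ` with range `H` and kernel
`ι F`. Cellularity says that an endomorphism `φ` of `G` is determined by `π ∘ φ`, and that every
`H`-valued `f : G →+ ℚ` is of the form `π ∘ φ`. Suppose `F ≠ 0`, with a basis vector `e` and its
coordinate functional `f₀ : F → ℤ`, and choose `g₀ ∈ G` with `π g₀ = 1`.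

* If `H` were `p`-divisible, `π / p` would lift to an inverse of multiplication by `p` on `G`, so
  `e` would be divisible by `p` in `F`. Hence every prime `p` has a largest power `n = p ^ k` with
  `1 / n ∈ H`.
* As `ℚ` is injective, `f₀` extends to `f : G →+ ℚ` with `f g₀ = 0`. It is `H`-valued, so
  `f = π ∘ φ` for some `φ`. The number `d = f (φ e)` is an integer.
* Fix `p` and `n` as above and `v ∈ G` with `π v = 1 / n`, and let `c = n f(v) ∈ ℤ`. The functional
  `(f - c π) / n` is again `H`-valued, so it lifts to some `ψ`, and `φ - c = n ψ`. Evaluating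
  `π (φ - c)² = n² π ψ²` at `e` gives `d - 2 c ∈ n² H ∩ ℤ ⊆ n ℤ`.
* Therefore `g = 2 f - d π` takes an integral value at `v`, and so `g` has no `p` in its
  denominators. This holds for all `p`, so `g` is a homomorphism `G → ℤ`, with `g e = 2`. Then
  `x ↦ g x • e` is a nonzero endomorphism of `G` killed by `π`, a contradiction.
-/

namespace CellularRational

lemma inv_den_mem (H : AddSubgroup ℚ) (h1 : (1 : ℚ) ∈ H) {h : ℚ} (hh : h ∈ H) :
    (1 / (h.den : ℚ)) ∈ H := by
  have hb : (1 : ℤ) = h.num * Int.gcdA h.num h.den + h.den * Int.gcdB h.num h.den := by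
    rw [← Int.gcd_eq_gcd_ab]
    have := h.reduced
    simp only [Int.gcd, Int.natAbs_natCast]
    exact_mod_cast this.gcd_eq_one.symm
  have hd : (h.den : ℚ) ≠ 0 := by exact_mod_cast h.den_nz
  have hq : (1 : ℚ) = h.num * (Int.gcdA h.num h.den : ℤ) + h.den * (Int.gcdB h.num h.den : ℤ) := by
    exact_mod_cast hb
  have hn : (h.num : ℚ) = h * h.den := (Rat.mul_den_eq_num h).symm
  have : (1 / (h.den : ℚ)) = (Int.gcdA h.num h.den) • h + (Int.gcdB h.num h.den) • (1 : ℚ) := by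
    rw [zsmul_eq_mul, zsmul_eq_mul, div_eq_iff hd]
    rw [hn] at hq
    linear_combination hq
  rw [this]
  exact H.add_mem (H.zsmul_mem hh _) (H.zsmul_mem h1 _)

lemma inv_mem_of_dvd (H : AddSubgroup ℚ) {a b : ℕ} (hb : b ≠ 0) (hab : a ∣ b)
    (h : (1 / (b : ℚ)) ∈ H) : (1 / (a : ℚ)) ∈ H := by
  obtain ⟨c, rfl⟩ := hab
  have hc : (c : ℚ) ≠ 0 := by
    rintro h0
    exact hb (by rw [Nat.cast_eq_zero.1 h0, mul_zero])
  have ha : (a : ℚ) ≠ 0 := by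
    rintro h0
    exact hb (by rw [Nat.cast_eq_zero.1 h0, zero_mul])
  have : (1 / (a : ℚ)) = c • (1 / ((a * c : ℕ) : ℚ)) := by
    rw [nsmul_eq_mul]; push_cast; field_simp
  rw [this]
  exact H.nsmul_mem h _

lemma inv_mul_mem (H : AddSubgroup ℚ) {a b : ℕ} (ha : a ≠ 0) (hb : b ≠ 0) (hab : Nat.Coprime a b)
    (h1 : (1 / (a : ℚ)) ∈ H) (h2 : (1 / (b : ℚ)) ∈ H) : (1 / ((a : ℚ) * b)) ∈ H := by
  have hbz : (1 : ℤ) = a * Nat.gcdA a b + b * Nat.gcdB a b := by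
    rw [← Nat.gcd_eq_gcd_ab]; exact_mod_cast hab.gcd_eq_one.symm
  have hq : (1 : ℚ) = a * (Nat.gcdA a b : ℤ) + b * (Nat.gcdB a b : ℤ) := by exact_mod_cast hbz
  have ha' : (a : ℚ) ≠ 0 := by exact_mod_cast ha
  have hb' : (b : ℚ) ≠ 0 := by exact_mod_cast hb
  have : (1 / ((a : ℚ) * b)) = (Nat.gcdA a b) • (1 / (b : ℚ)) + (Nat.gcdB a b) • (1 / (a : ℚ)) := by
    rw [zsmul_eq_mul, zsmul_eq_mul]
    field_simp
    linear_combination hq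
  rw [this]
  exact H.add_mem (H.zsmul_mem h2 _) (H.zsmul_mem h1 _)

/-- If `p ^ k` is the largest power of `p` with `1 / p ^ k ∈ H`, then `p ^ k • H` is integral away
from denominators `m` prime to `p`, and these satisfy `1 / m ∈ H`. -/
lemma exists_full (H : AddSubgroup ℚ) (h1 : (1 : ℚ) ∈ H) {p : ℕ} (hp : p.Prime)
    (hdiv : ¬ ∀ k : ℕ, (1 / ((p ^ k : ℕ) : ℚ)) ∈ H) :
    ∃ k : ℕ, (1 / ((p ^ k : ℕ) : ℚ)) ∈ H ∧ ∀ h ∈ H, ∃ m : ℕ, m ≠ 0 ∧ Nat.Coprime p m ∧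
      (1 / (m : ℚ)) ∈ H ∧ ∃ t : ℤ, (m : ℚ) * (p ^ k : ℕ) * h = t := by
  classical
  push Not at hdiv
  have hk0 : Nat.find hdiv ≠ 0 := by
    intro h0
    have := Nat.find_spec hdiv
    rw [h0] at this
    simp [h1] at this
  obtain ⟨k, hk⟩ := Nat.exists_eq_succ_of_ne_zero hk0
  refine ⟨k, ?_, ?_⟩
  · have := Nat.find_min hdiv (m := k) (by omega)
    simpa using this
  intro h hh
  have hbad := Nat.find_spec hdiv
  rw [hk] at hbad
  obtain ⟨j, m, hpm, hden⟩ := Nat.exists_eq_pow_mul_and_not_dvd h.den_nz p hp.ne_one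
  have hdm := inv_den_mem H h1 hh
  have hjk : j ≤ k := by
    by_contra hlt
    apply hbad
    refine inv_mem_of_dvd H h.den_nz ?_ hdm
    rw [hden]
    exact (pow_dvd_pow p (by omega)).mul_right m
  have hm : m ≠ 0 := by rintro rfl; simp at hpm
  refine ⟨m, hm, (Nat.Prime.coprime_iff_not_dvd hp).2 hpm,
    inv_mem_of_dvd H h.den_nz (hden ▸ dvd_mul_left _ _) hdm, (p ^ (k - j) : ℕ) * h.num, ?_⟩
  have hn : (h.num : ℚ) = h * h.den := (Rat.mul_den_eq_num h).symm
  have hpk : p ^ k = p ^ (k - j) * p ^ j := by rw [← pow_add]; congr 1; omega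
  rw [Int.cast_mul, hn, hden, hpk]
  push_cast
  ring

/-- The case `1 ∈ H`, with `π` regarded as a map to `ℚ` with range `H`. -/
lemma core (H : AddSubgroup ℚ) (h1 : (1 : ℚ) ∈ H)
    {F G : Type} [AddCommGroup F] [AddCommGroup G] [Module.Free ℤ F]
    (ι : F →+ G) (π : G →+ ℚ) (hinj : Function.Injective ι)
    (hran : ∀ q, q ∈ H ↔ ∃ x, π x = q)
    (hex : ∀ x, π x = 0 ↔ ∃ u, ι u = x)
    (huniq : ∀ φ ψ : G →+ G, (∀ x, π (φ x) = π (ψ x)) → φ = ψ)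
    (hlift : ∀ f : G →+ ℚ, (∀ x, f x ∈ H) → ∃ φ : G →+ G, ∀ x, π (φ x) = f x) :
    Subsingleton F := by
  by_contra hF
  rw [not_subsingleton_iff_nontrivial] at hF
  have hπι : ∀ u, π (ι u) = 0 := fun u => (hex _).2 ⟨u, rfl⟩
  obtain ⟨e, f₀, hf₀⟩ : ∃ (e : F) (f₀ : F →+ ℤ), f₀ e = 1 := by
    let b := Module.Free.chooseBasis ℤ F
    obtain ⟨i⟩ := b.index_nonempty
    exact ⟨b i, (b.coord i).toAddMonoidHom, by simp⟩
  obtain ⟨g₀, hg₀⟩ := (hran 1).1 h1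
  have hnondiv : ∀ p : ℕ, p.Prime → ¬ ∀ k : ℕ, (1 / ((p ^ k : ℕ) : ℚ)) ∈ H := by
    intro p hp hall
    have hp0 : (p : ℚ) ≠ 0 := by exact_mod_cast hp.ne_zero
    obtain ⟨ψ, hψ⟩ := hlift ((AddMonoidHom.mulLeft (1 / (p : ℚ))).comp π) (by
      intro x
      have hx : π x ∈ H := (hran _).2 ⟨x, rfl⟩
      have hdm := inv_den_mem H h1 hx
      obtain ⟨j, m, hpm, hden⟩ := Nat.exists_eq_pow_mul_and_not_dvd (π x).den_nz p hp.ne_one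
      have hm : m ≠ 0 := by rintro rfl; simp at hpm
      have hcop : Nat.Coprime (p ^ (j + 1)) m :=
        Nat.Coprime.pow_left _ ((Nat.Prime.coprime_iff_not_dvd hp).2 hpm)
      have hmem := inv_mul_mem H (pow_ne_zero _ hp.ne_zero) hm hcop (hall (j + 1))
        (inv_mem_of_dvd H (π x).den_nz (hden ▸ dvd_mul_left _ _) hdm)
      have hm' : (m : ℚ) ≠ 0 := by exact_mod_cast hm
      have hn : ((π x).num : ℚ) = π x * (π x).den := (Rat.mul_den_eq_num _).symm
      have : (1 / (p : ℚ)) * π x = (π x).num • (1 / (((p ^ (j + 1) : ℕ) : ℚ) * m)) := by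
        rw [zsmul_eq_mul, hn, hden]
        push_cast
        field_simp
        ring
      simp only [AddMonoidHom.comp_apply, AddMonoidHom.coe_mulLeft]
      rw [this]
      exact H.zsmul_mem hmem _)
    simp only [AddMonoidHom.comp_apply, AddMonoidHom.coe_mulLeft] at hψ
    have hid : p • ψ = AddMonoidHom.id G := by
      apply huniq
      intro x
      simp only [AddMonoidHom.nsmul_apply, map_nsmul, hψ, nsmul_eq_mul, AddMonoidHom.id_apply]
      field_simp
    obtain ⟨u, hu⟩ := (hex (ψ (ι e))).1 (by rw [hψ, hπι, mul_zero])
    have he : e = p • u := by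
      apply hinj
      rw [map_nsmul, hu]
      exact (DFunLike.congr_fun hid (ι e)).symm
    have : (1 : ℤ) = p * f₀ u := by rw [← hf₀, he, map_nsmul, nsmul_eq_mul]
    have hdvd : (p : ℤ) ∣ 1 := ⟨_, this⟩
    exact hp.one_lt.ne' (by exact_mod_cast Int.eq_one_of_dvd_one (by positivity) hdvd)
  obtain ⟨f, hfι, hfg⟩ : ∃ f : G →+ ℚ, (∀ u, f (ι u) = f₀ u) ∧ f g₀ = 0 := by
    obtain ⟨f', hf'⟩ := (Module.Baer.of_divisible ℚ).extension_property_addMonoidHom ι hinj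
      ((Int.castAddHom ℚ).comp f₀)
    have hf'' : ∀ u, f' (ι u) = f₀ u := fun u => by
      have := DFunLike.congr_fun hf' u
      simpa using this
    refine ⟨f' - (AddMonoidHom.mulLeft (f' g₀)).comp π, fun u => ?_, ?_⟩
    · simp [hf'', hπι]
    · simp [hg₀]
  have hfint : ∀ (x : G) (t : ℤ), π x = t → ∃ s : ℤ, f x = s := by
    intro x t ht
    obtain ⟨u, hu⟩ := (hex (x - t • g₀)).1 (by simp [hg₀, ht])
    refine ⟨f₀ u, ?_⟩
    rw [← hfι, hu]
    simp [hfg]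
  obtain ⟨φ, hφ⟩ := hlift f (by
    intro x
    have hx : π x ∈ H := (hran _).2 ⟨x, rfl⟩
    have hdm := inv_den_mem H h1 hx
    obtain ⟨s, hs⟩ := hfint ((π x).den • x) (π x).num (by
      rw [map_nsmul, nsmul_eq_mul, mul_comm, Rat.mul_den_eq_num])
    have hd : ((π x).den : ℚ) ≠ 0 := by exact_mod_cast (π x).den_nz
    rw [map_nsmul, nsmul_eq_mul] at hs
    have : f x = s • (1 / ((π x).den : ℚ)) := by
      rw [zsmul_eq_mul, ← hs]; field_simp
    rw [this]
    exact H.zsmul_mem hdm _)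
  obtain ⟨d, hd⟩ := hfint (φ (ι e)) 1 (by rw [hφ, hfι, hf₀])
  have hloc : ∀ p : ℕ, p.Prime → ∀ x : G, ∃ m : ℕ, Nat.Coprime p m ∧
      ∃ t : ℤ, (m : ℚ) * (2 * f x - d * π x) = t := by
    intro p hp x
    obtain ⟨k, hk, hfull⟩ := exists_full H h1 hp (hnondiv p hp)
    obtain ⟨n, hn⟩ : ∃ n, n = p ^ k := ⟨_, rfl⟩
    rw [← hn] at hk hfull
    have hn0 : n ≠ 0 := hn ▸ pow_ne_zero _ hp.ne_zero
    have hnq : (n : ℚ) ≠ 0 := by exact_mod_cast hn0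
    obtain ⟨v, hv⟩ := (hran _).1 hk
    obtain ⟨c, hc⟩ := hfint (n • v) 1 (by
      rw [map_nsmul, nsmul_eq_mul, hv]; field_simp; simp)
    rw [map_nsmul, nsmul_eq_mul] at hc
    -- modulo the span of `v`, a multiple of `y` prime to `p` lies in the kernel
    have hdec : ∀ y : G, ∃ m : ℕ, m ≠ 0 ∧ Nat.Coprime p m ∧ (1 / (m : ℚ)) ∈ H ∧
        ∃ (t : ℤ) (u : F), m • y = t • v + ι u := by
      intro y
      obtain ⟨m, hm, hpm, hmH, t, ht⟩ := hfull (π y) ((hran _).2 ⟨y, rfl⟩)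
      obtain ⟨u, hu⟩ := (hex (m • y - t • v)).1 (by
        simp only [map_sub, map_nsmul, map_zsmul, nsmul_eq_mul, zsmul_eq_mul, hv, ← ht]
        field_simp
        simp)
      exact ⟨m, hm, hpm, hmH, t, u, by rw [hu]; abel⟩
    obtain ⟨ψ, hψ⟩ := hlift ((AddMonoidHom.mulLeft (1 / (n : ℚ))).comp
        (f - (AddMonoidHom.mulLeft (c : ℚ)).comp π)) (by
      intro y
      obtain ⟨m, hm, hpm, hmH, t, u, hy⟩ := hdec y
      have hmem := inv_mul_mem H hn0 hm (hn ▸ Nat.Coprime.pow_left k hpm) hk hmH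
      have hm' : (m : ℚ) ≠ 0 := by exact_mod_cast hm
      have e1 := congrArg f hy
      have e2 := congrArg π hy
      simp only [map_add, map_nsmul, map_zsmul, nsmul_eq_mul, zsmul_eq_mul, hv, hfι, hπι] at e1 e2
      have : (1 / (n : ℚ)) * (f y - c * π y) = (f₀ u) • (1 / ((n : ℚ) * m)) := by
        rw [zsmul_eq_mul]
        have e3 : (m : ℚ) * (f y - c * π y) = f₀ u := by
          have hfv : f v = c * (1 / n) := by rw [← hc]; field_simp
          rw [hfv] at e1
          linear_combination e1 - c * e2
        rw [← e3]
        field_simp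
      simp only [AddMonoidHom.comp_apply, AddMonoidHom.coe_mulLeft, AddMonoidHom.sub_apply]
      rw [this]
      exact H.zsmul_mem hmem _)
    simp only [AddMonoidHom.comp_apply, AddMonoidHom.coe_mulLeft, AddMonoidHom.sub_apply] at hψ
    have hφψ : φ = n • ψ + c • AddMonoidHom.id G := by
      apply huniq
      intro y
      simp only [AddMonoidHom.add_apply, AddMonoidHom.nsmul_apply, AddMonoidHom.zsmul_apply,
        AddMonoidHom.id_apply, map_add, map_nsmul, map_zsmul, hψ, hφ, nsmul_eq_mul, zsmul_eq_mul]
      field_simp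
      ring
    -- evaluate `π (φ - c)² = n² π ψ²` at `e`
    have hsq : (d : ℚ) - 2 * c = n * (n * π (ψ (ψ (ι e)))) := by
      have hφe : φ (ι e) = n • ψ (ι e) + c • ι e := by
        conv_lhs => rw [hφψ]
        simp
      have a1 : π (ψ (ι e)) = 1 / n := by rw [hψ, hfι, hπι, hf₀]; simp
      have a2 := hψ (ψ (ι e))
      have a3 := congrArg f hφe
      simp only [map_add, map_nsmul, map_zsmul, nsmul_eq_mul, zsmul_eq_mul, hfι, hf₀, hd] at a3
      rw [a2, a1, a3]
      field_simp
      push_cast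
      ring
    have hdvd : (n : ℤ) ∣ d - 2 * c := by
      obtain ⟨m, hm, hpm, -, t, ht⟩ := hfull (π (ψ (ψ (ι e)))) ((hran _).2 ⟨_, rfl⟩)
      have : (m : ℤ) * (d - 2 * c) = n * t := by
        have : (m : ℚ) * (d - 2 * c) = n * t := by rw [hsq, ← ht]; ring
        exact_mod_cast this
      have hcop : IsCoprime (n : ℤ) (m : ℤ) :=
        Nat.isCoprime_iff_coprime.2 (hn ▸ Nat.Coprime.pow_left k hpm)
      exact hcop.dvd_of_dvd_mul_left ⟨t, this⟩
    obtain ⟨w, hw⟩ := hdvd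
    have hwq : (d : ℚ) - 2 * c = n * w := by exact_mod_cast hw
    obtain ⟨m, hm, hpm, -, t, u, hx⟩ := hdec x
    refine ⟨m, hpm, 2 * f₀ u - t * w, ?_⟩
    have e1 := congrArg f hx
    have e2 := congrArg π hx
    simp only [map_add, map_nsmul, map_zsmul, nsmul_eq_mul, zsmul_eq_mul, hv, hfι, hπι] at e1 e2
    have hfv : f v = c * (1 / n) := by rw [← hc]; field_simp
    have hw' : (w : ℚ) = (d - 2 * c) * (1 / n) := by rw [hwq]; field_simp
    rw [hfv] at e1
    push_cast
    rw [hw']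
    linear_combination 2 * e1 - d * e2
  have hintegral : ∀ x : G, ∃ t : ℤ, (t : ℚ) = 2 * f x - d * π x := by
    intro x
    obtain ⟨q, hq⟩ : ∃ q, q = 2 * f x - d * π x := ⟨_, rfl⟩
    suffices hden : q.den = 1 by
      exact ⟨q.num, by rw [← hq]; exact Rat.coe_int_num_of_den_eq_one hden⟩
    by_contra hne
    obtain ⟨p, hp, hpd⟩ := Nat.exists_prime_and_dvd hne
    obtain ⟨m, hpm, t, ht⟩ := hloc p hp x
    rw [← hq] at ht
    have h2 : (m : ℤ) * q.num = t * q.den := by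
      have : (m : ℚ) * q.num = t * q.den := by
        rw [← ht, ← Rat.mul_den_eq_num q]; ring
      exact_mod_cast this
    have h3 : (p : ℤ) ∣ m * q.num := h2 ▸ (Int.natCast_dvd_natCast.2 hpd).mul_left t
    have h4 : (p : ℤ) ∣ q.num := (Nat.isCoprime_iff_coprime.2 hpm).dvd_of_dvd_mul_left h3
    have h5 : p ∣ Nat.gcd q.num.natAbs q.den := Nat.dvd_gcd (Int.natCast_dvd.1 h4) hpd
    rw [q.reduced.gcd_eq_one] at h5
    exact hp.one_lt.ne' (Nat.dvd_one.1 h5)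
  choose g hg using hintegral
  let g' : G →+ ℤ := AddMonoidHom.mk' g (by
    intro x y
    have : (g (x + y) : ℚ) = g x + g y := by
      rw [hg, hg, hg, map_add, map_add]; ring
    exact_mod_cast this)
  have hzero : ((zmultiplesHom G) (ι e)).comp g' = 0 := by
    apply huniq
    intro x
    simp [hπι]
  have hge : g (ι e) = 2 := by
    have : (g (ι e) : ℚ) = 2 := by rw [hg, hfι, hπι, hf₀]; simp
    exact_mod_cast this
  have h2e : (2 : ℤ) • ι e = 0 := by
    have := DFunLike.congr_fun hzero (ι e)
    simpa [g', hge] using this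
  have h2e' : (2 : ℤ) • e = 0 := hinj (by rw [map_zsmul, h2e, map_zero])
  have := congrArg f₀ h2e'
  rw [map_zsmul, hf₀, map_zero] at this
  norm_num at this

end CellularRational


/-- If `H ⊆ ℚ` is a nonzero additive subgroup, then every cellular exact
sequence `0 → F → G → H → 0` with `F` a free abelian group is trivial, i.e. `F = 0`. -/
theorem cellular_cover_of_rational_group_with_free_kernel_trivial
    (H : AddSubgroup ℚ) (hH : H ≠ ⊥)
    (F G : Type) [AddCommGroup F] [AddCommGroup G] [Module.Free ℤ F]
    (ι : F →+ G) (π : G →+ H)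
    (hinj : Function.Injective ι)
    (hsurj : Function.Surjective π)
    (hex : ι.range = π.ker)
    (hcell : Function.Bijective (fun φ : G →+ G => π.comp φ)) :
    Subsingleton F := by
  obtain ⟨⟨a, haH⟩, ha'⟩ := AddSubgroup.ne_bot_iff_exists_ne_zero.1 hH
  have ha : a ≠ 0 := fun h0 => ha' (Subtype.ext h0)
  -- rescale by `a⁻¹`, so that the image contains `1`
  let s : ℚ →+ ℚ := AddMonoidHom.mulLeft a⁻¹
  have hs : ∀ q, s q = a⁻¹ * q := fun q => rfl
  have hsinj : Function.Injective s := fun x y hxy => by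
    simpa [hs, ha] using hxy
  refine CellularRational.core (H.map s) ⟨a, haH, by simp [hs, ha]⟩ ι
    (s.comp (H.subtype.comp π)) hinj ?_ ?_ ?_ ?_
  · intro q
    constructor
    · rintro ⟨h, hh, rfl⟩
      obtain ⟨x, hx⟩ := hsurj ⟨h, hh⟩
      exact ⟨x, by simp [hx]⟩
    · rintro ⟨x, rfl⟩
      exact ⟨π x, (π x).2, rfl⟩
  · intro x
    have : x ∈ ι.range ↔ x ∈ π.ker := by rw [hex]
    rw [AddMonoidHom.mem_range, AddMonoidHom.mem_ker] at this
    rw [this]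
    simp [hs, ha]
  · intro φ ψ h
    apply hcell.1
    ext x
    exact hsinj (h x)
  · intro f hf
    have hmem : ∀ x, a * f x ∈ H := by
      intro x
      obtain ⟨h, hh, hx⟩ := hf x
      rw [← hx, hs, mul_inv_cancel_left₀ ha]
      exact hh
    obtain ⟨φ, hφ⟩ := hcell.2 (((AddMonoidHom.mulLeft a).comp f).codRestrict H hmem)
    refine ⟨φ, fun x => ?_⟩
    have := congrArg Subtype.val (DFunLike.congr_fun hφ x)
    simp only [AddMonoidHom.comp_apply] at this
    change s (π (φ x)).1 = f x
    rw [this, hs]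
    change a⁻¹ * (a * f x) = f x
    rw [inv_mul_cancel_left₀ ha]
end

section
/- Let q be a prime and let R be the additive subgroup of ℚ generated by {1/p : p prime, p ≠ q}. Then End(R) ≅ ℤ: every additive endomorphism of R is multiplication by an integer. -/
/-!
An additive map between subgroups of `ℚ` is multiplication by a rational number `r`, here
`r = φ 1`. Every element of `R` has `p`-adic norm at most `p` for each prime `p`, and `q`-adic norm
at most `1`, since the generators do and the norm is nonarchimedean. So `r ∈ R` is `q`-integral;
for a prime `p ≠ q`, `φ (1/p) = r/p ∈ R` has norm `p * |r|_p ≤ p`, so `r` is `p`-integral as well.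
A rational number that is integral at every prime is an integer.
-/

/-- A bound on the `p`-adic norm passes from generators to the additive subgroup of `ℚ` that they
generate, by the ultrametric inequality. -/
lemma padicNorm_le_of_mem_closure (p : ℕ) [Fact p.Prime] {S : Set ℚ} {c : ℚ} (hc : 0 ≤ c)
    (hS : ∀ x ∈ S, padicNorm p x ≤ c) {x : ℚ} (hx : x ∈ AddSubgroup.closure S) :
    padicNorm p x ≤ c := by
  induction hx using AddSubgroup.closure_induction with
  | mem x h => exact hS x h
  | zero => simpa using hc
  | add x y _ _ hx hy => exact padicNorm.nonarchimedean.trans (max_le hx hy)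
  | neg x _ hx => simpa using hx

lemma den_eq_one_of_forall_padicNorm_le_one (r : ℚ)
    (h : ∀ p : ℕ, p.Prime → padicNorm p r ≤ 1) : r.den = 1 := by
  by_contra hne
  obtain ⟨p, hp, hd⟩ := Nat.exists_prime_and_dvd hne
  have := Fact.mk hp
  have h2 : padicNorm p (r.num : ℚ) < 1 := by
    rw [← Rat.mul_den_eq_num r, padicNorm.mul]
    calc _ ≤ 1 * padicNorm p (r.den : ℚ) :=
          mul_le_mul_of_nonneg_right (h p hp) (padicNorm.nonneg _)
      _ < 1 := by rw [one_mul]; exact (padicNorm.nat_lt_one_iff _).2 hd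
  have h3 : p ∣ r.num.natAbs := Int.natCast_dvd.1 ((padicNorm.int_lt_one_iff _).1 h2)
  exact hp.one_lt.ne' (Nat.eq_one_of_dvd_coprimes r.reduced h3 hd)

/-- An additive map on a subgroup of `ℚ` containing `1` is multiplication by its value at `1`. -/
lemma coe_map_eq_mul_map_one {R : AddSubgroup ℚ} (h1 : (1 : ℚ) ∈ R) (φ : R →+ R) (x : R) :
    (φ x : ℚ) = x * φ ⟨1, h1⟩ := by
  have h : (x : ℚ).den • x = (x : ℚ).num • (⟨1, h1⟩ : R) := by
    ext
    simp [mul_comm]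
  have h' := congrArg (fun y : R => (y : ℚ)) (congrArg φ h)
  simp only [map_nsmul, map_zsmul, AddSubgroup.coe_nsmul, AddSubgroup.coe_zsmul,
    nsmul_eq_mul, zsmul_eq_mul] at h'
  have hd : ((x : ℚ).den : ℚ) ≠ 0 := by exact_mod_cast (x : ℚ).den_ne_zero
  apply mul_left_cancel₀ hd
  rw [h', ← mul_assoc, Rat.den_mul_eq_num]

/-- For a prime `q`, let `R ⊆ ℚ` be the additive subgroup generated by the
`1/p` for primes `p ≠ q`.  Then `End(R) ≅ ℤ`: every additive endomorphism of `R` is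
multiplication by an integer. -/
theorem endomorphisms_of_rational_group_are_integers (q : ℕ) (hq : q.Prime)
    (R : AddSubgroup ℚ)
    (hR : R = AddSubgroup.closure {x : ℚ | ∃ p : ℕ, p.Prime ∧ p ≠ q ∧ x = 1 / (p : ℚ)})
    (φ : R →+ R) :
    ∃ n : ℤ, ∀ x : R, φ x = n • x := by
  have hgen : ∀ p : ℕ, p.Prime → p ≠ q → 1 / (p : ℚ) ∈ R := by
    intro p hp hpq
    rw [hR]
    exact AddSubgroup.subset_closure ⟨p, hp, hpq, rfl⟩
  have h1 : (1 : ℚ) ∈ R := by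
    obtain ⟨p, hle, hp⟩ := Nat.exists_infinite_primes (q + 1)
    have := R.nsmul_mem (hgen p hp (by omega)) p
    have hp0 : (p : ℚ) ≠ 0 := by exact_mod_cast hp.ne_zero
    simpa [hp0] using this
  have hmul := coe_map_eq_mul_map_one h1 φ
  set r : ℚ := ((φ ⟨1, h1⟩ : R) : ℚ)
  have hrR : r ∈ R := (φ ⟨1, h1⟩).2
  -- A generator `1/l` has `p`-adic norm `1` for every prime `p ≠ l`.
  have hne : ∀ p l : ℕ, p.Prime → l.Prime → p ≠ l → padicNorm p (1 / (l : ℚ)) = 1 := by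
    intro p l hp hl hpl
    have := Fact.mk hp
    have := Fact.mk hl
    rw [padicNorm.div, padicNorm.one, padicNorm.padicNorm_of_prime_of_ne hpl, div_one]
  have hint : ∀ p : ℕ, p.Prime → padicNorm p r ≤ 1 := by
    intro p hp
    have := Fact.mk hp
    by_cases hpq : p = q
    · subst hpq
      rw [hR] at hrR
      refine padicNorm_le_of_mem_closure p zero_le_one ?_ hrR
      rintro x ⟨l, hl, hlp, rfl⟩
      exact (hne p l hp hl hlp.symm).le
    · have hp0 : (0 : ℚ) < p := by exact_mod_cast hp.pos
      have hp1 : (1 : ℚ) ≤ p := by exact_mod_cast hp.one_le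
      have hnp : padicNorm p (1 / (p : ℚ)) = p := by
        rw [padicNorm.div, padicNorm.one, padicNorm.padicNorm_p_of_prime, one_div, inv_inv]
      have hmem : 1 / (p : ℚ) * r ∈ R := by
        rw [← hmul ⟨_, hgen p hp hpq⟩]
        exact (φ _).2
      rw [hR] at hmem
      have hle : padicNorm p (1 / (p : ℚ) * r) ≤ p := by
        refine padicNorm_le_of_mem_closure p hp0.le ?_ hmem
        rintro x ⟨l, hl, -, rfl⟩
        by_cases hpl : p = l
        · rw [← hpl, hnp]
        · rw [hne p l hp hl hpl]
          exact hp1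
      rw [padicNorm.mul, hnp] at hle
      exact (mul_le_iff_le_one_right hp0).1 hle
  refine ⟨r.num, fun x => Subtype.ext ?_⟩
  rw [hmul x, AddSubgroup.coe_zsmul, zsmul_eq_mul,
    Rat.coe_int_num_of_den_eq_one (den_eq_one_of_forall_padicNorm_le_one r hint), mul_comm]
end

section
/- Let q be a prime, let R be the additive subgroup of ℚ generated by {1/p : p prime, p ≠ q}, and let K be a q-divisible abelian group (i.e. qK = K). Then Hom(K, R) = 0: every additive homomorphism from K to R is zero. -/
/-!
Every element of `R` can be written with a denominator prime to `q`, so if `x ∈ ℚ` lies in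
`q ^ n • R` then `q ^ n` divides the numerator of `x`. For `x = f k` with `K` `q`-divisible this
holds for every `n`, which forces the numerator, hence `f k`, to vanish.
-/

/-- Elements of `R` are `q`-integral: such an `x` has some denominator `d` prime to `q`. -/
lemma exists_coprime_denominator {q : ℕ} (hq : q.Prime) {x : ℚ}
    (hx : x ∈ AddSubgroup.closure {x : ℚ | ∃ p : ℕ, p.Prime ∧ p ≠ q ∧ x = 1 / (p : ℚ)}) :
    ∃ (d : ℕ) (m : ℤ), q.Coprime d ∧ (d : ℚ) * x = m := by
  induction hx using AddSubgroup.closure_induction with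
  | mem x hx =>
    obtain ⟨p, hp, hpq, rfl⟩ := hx
    refine ⟨p, 1, (Nat.coprime_primes hq hp).2 hpq.symm, ?_⟩
    have : (p : ℚ) ≠ 0 := by exact_mod_cast hp.ne_zero
    simp [this]
  | zero => exact ⟨1, 0, by simp, by simp⟩
  | add x y _ _ ihx ihy =>
    obtain ⟨d, m, hd, h⟩ := ihx
    obtain ⟨e, n, he, h'⟩ := ihy
    refine ⟨d * e, m * e + n * d, hd.mul_right he, ?_⟩
    push_cast
    rw [← h, ← h']
    ring
  | neg x _ ih =>
    obtain ⟨d, m, hd, h⟩ := ih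
    exact ⟨d, -m, hd, by push_cast; rw [← h]; ring⟩

lemma pow_dvd_num_of_eq_pow_mul {q n d : ℕ} {m : ℤ} {x r : ℚ} (hd : q.Coprime d)
    (hr : (d : ℚ) * r = m) (hx : x = (q : ℚ) ^ n * r) : (q : ℤ) ^ n ∣ x.num := by
  have key : (d : ℤ) * x.num = (q : ℤ) ^ n * (m * x.den) := by
    have h : (d : ℚ) * x.num = (q : ℚ) ^ n * (m * x.den) := by
      rw [← Rat.mul_den_eq_num x, ← hr]
      linear_combination (d : ℚ) * x.den * hx
    exact_mod_cast h
  have hcop : IsCoprime ((q : ℤ) ^ n) (d : ℤ) := (Nat.isCoprime_iff_coprime.2 hd).pow_left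
  exact hcop.dvd_of_dvd_mul_left ⟨_, key⟩

lemma exists_pow_nsmul_eq {K : Type} [AddCommGroup K] {q : ℕ}
    (hdiv : ∀ k : K, ∃ y : K, q • y = k) (n : ℕ) (k : K) : ∃ y : K, q ^ n • y = k := by
  induction n generalizing k with
  | zero => exact ⟨k, by simp⟩
  | succ n ih =>
    obtain ⟨z, rfl⟩ := ih k
    obtain ⟨y, rfl⟩ := hdiv z
    exact ⟨y, by rw [pow_succ, mul_smul]⟩

/-- For a prime `q`, let `R ⊆ ℚ` be the additive subgroup generated by the
`1/p` for primes `p ≠ q`.  If `K` is a `q`-divisible abelian group, then `Hom(K, R) = 0`. -/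
theorem hom_of_q_divisible_into_rational_group_is_zero (q : ℕ) (hq : q.Prime)
    (R : AddSubgroup ℚ)
    (hR : R = AddSubgroup.closure {x : ℚ | ∃ p : ℕ, p.Prime ∧ p ≠ q ∧ x = 1 / (p : ℚ)})
    (K : Type) [AddCommGroup K]
    (hdiv : ∀ k : K, ∃ y : K, q • y = k)
    (f : K →+ R) :
    f = 0 := by
  ext k
  have hdvd : ∀ n : ℕ, (q : ℤ) ^ n ∣ (f k : ℚ).num := by
    intro n
    obtain ⟨y, rfl⟩ := exists_pow_nsmul_eq hdiv n k
    obtain ⟨d, m, hd, h⟩ := exists_coprime_denominator hq (hR.le (f y).2)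
    exact pow_dvd_num_of_eq_pow_mul hd h (by simp)
  have hnum : (f k : ℚ).num = 0 := by
    by_contra hne
    -- A nonzero numerator `a` would satisfy `q ^ |a| ≤ |a|`, but `|a| < q ^ |a|`.
    have hle := Nat.le_of_dvd (Int.natAbs_pos.2 hne)
      (by simpa [Int.natAbs_pow] using Int.natAbs_dvd_natAbs.2 (hdvd (f k : ℚ).num.natAbs))
    exact absurd hle (Nat.lt_pow_self hq.one_lt).not_ge
  simpa using Rat.num_eq_zero.1 hnum
end

section
/- Let q be a prime and let Π₂ be an infinite, coinfinite set of primes with q ∉ Π₂. Then there exists a bijection σ : ℤ[1/q] → Π₂ such that z ∉ σ(z)·ℤ[1/q] for every nonzero z ∈ ℤ[1/q], i.e. the prime σ(z) does not divide z in the ring ℤ[1/q]. -/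
/-!
Write `ℤ[1/q]` for the group `K`. If a prime `p ≠ q` divides `z` in `ℤ[1/q]`, then it divides the
numerator of `z` in lowest terms (`dvd_num_of_eq_mul`), so it suffices to find a bijection
`σ : K → Π₂` with `σ z ∤ z.num` for all `z ≠ 0`. By the version of the Schröder–Bernstein theorem
that respects a relation, this needs only two injections pairing nonzero elements with primes not
dividing their numerators:

* `K → Π₂` sends `z` to the `n`-th element of `Π₂`, where `n` codes the pair of an index of `z` in
  an enumeration of `K` and `|z.num| + 1`; this prime exceeds `|z.num|`.
* `Π₂ → K` sends `p` to the unit `q ^ p`.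
-/

/-- Elements of `ℤ[1/q]` have a power of `q` as a denominator. -/
lemma exists_mul_pow_eq_int (q : ℕ) (hq : q.Prime) {y : ℚ}
    (hy : y ∈ AddSubgroup.closure {x : ℚ | ∃ n : ℕ, x = 1 / (q : ℚ) ^ n}) :
    ∃ (k : ℕ) (m : ℤ), y * (q : ℚ) ^ k = m := by
  have hq0 : (q : ℚ) ≠ 0 := by exact_mod_cast hq.ne_zero
  induction hy using AddSubgroup.closure_induction with
  | mem x hx =>
    obtain ⟨n, rfl⟩ := hx
    exact ⟨n, 1, by field_simp; simp⟩
  | zero => exact ⟨0, 0, by simp⟩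
  | add x y _ _ hx hy =>
    obtain ⟨k, m, h⟩ := hx
    obtain ⟨l, n, h'⟩ := hy
    refine ⟨k + l, m * q ^ l + n * q ^ k, ?_⟩
    push_cast
    rw [← h, ← h']
    ring
  | neg x _ hx =>
    obtain ⟨k, m, h⟩ := hx
    exact ⟨k, -m, by push_cast; rw [← h]; ring⟩

lemma dvd_num_of_eq_mul (q : ℕ) (hq : q.Prime) {p : ℕ} (hp : p.Prime) (hpq : p ≠ q) {y z : ℚ}
    (hy : y ∈ AddSubgroup.closure {x : ℚ | ∃ n : ℕ, x = 1 / (q : ℚ) ^ n})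
    (h : (p : ℚ) * y = z) : (p : ℤ) ∣ z.num := by
  obtain ⟨k, m, hk⟩ := exists_mul_pow_eq_int q hq hy
  have key : z.num * (q : ℤ) ^ k = p * (m * z.den) := by
    have h2 : (z.num : ℚ) = z * z.den := (Rat.mul_den_eq_num z).symm
    have : (z.num : ℚ) * (q : ℚ) ^ k = p * (m * z.den) := by
      rw [h2, ← hk, ← h]
      ring
    exact_mod_cast this
  have hp' : Prime (p : ℤ) := Nat.prime_iff_prime_int.mp hp
  rcases hp'.dvd_or_dvd (Dvd.intro _ key.symm) with h1 | h1
  · exact h1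
  · have h3 : p ∣ q := by exact_mod_cast hp'.dvd_of_dvd_pow h1
    exact absurd ((Nat.prime_dvd_prime_iff_eq hp hq).mp h3) hpq

/-- Let `q` be a prime and `Π₂` an infinite, coinfinite set of primes not
containing `q`.  Then there is a bijection `σ : ℤ[1/q] → Π₂` such that `σ(z)` does not divide
`z` in `ℤ[1/q]` for every nonzero `z ∈ ℤ[1/q]` (where `ℤ[1/q] ⊆ ℚ` is the additive subgroup
generated by the `1/q^n`). -/
theorem exists_bijection_primes_not_dividing (q : ℕ) (hq : q.Prime)
    (P2 : Set ℕ) (hprime : ∀ p ∈ P2, p.Prime) (hq2 : q ∉ P2)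
    (hinf : P2.Infinite) (hcoinf : ({p : ℕ | p.Prime} \ P2).Infinite)
    (K : AddSubgroup ℚ)
    (hK : K = AddSubgroup.closure {x : ℚ | ∃ n : ℕ, x = 1 / (q : ℚ) ^ n}) :
    ∃ σ : K → P2, Function.Bijective σ ∧
      ∀ z : K, z ≠ 0 → ¬ ∃ y ∈ K, ((σ z : ℕ) : ℚ) * y = (z : ℚ) := by
  have hne : ∀ p ∈ P2, p ≠ q := fun p hp h => hq2 (h ▸ hp)
  have hqK : ∀ n : ℕ, (q : ℚ) ^ n ∈ K := by
    intro n
    have h1 : (1 : ℚ) ∈ K := hK ▸ AddSubgroup.subset_closure ⟨0, by simp⟩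
    simpa using K.nsmul_mem h1 (q ^ n)
  obtain ⟨e, he⟩ := exists_injective_nat K
  let c : K → ℕ := fun z => Nat.pair (e z) ((z : ℚ).num.natAbs + 1)
  let f : K → P2 := fun z => ⟨Nat.nth (· ∈ P2) (c z), Nat.nth_mem_of_infinite hinf _⟩
  let g : P2 → K := fun p => ⟨(q : ℚ) ^ (p : ℕ), hqK p⟩
  have hf : Function.Injective f := by
    intro a b hab
    have h1 : c a = c b := Nat.nth_injective hinf (congrArg Subtype.val hab)
    exact he (Nat.pair_eq_pair.mp h1).1
  have hg : Function.Injective g := by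
    intro a b hab
    have h1 : (q : ℚ) ^ (a : ℕ) = (q : ℚ) ^ (b : ℕ) := congrArg Subtype.val hab
    exact Subtype.ext (Nat.pow_right_injective hq.two_le (by exact_mod_cast h1))
  have hRf : ∀ z : K, z ≠ 0 → ¬ ((f z : ℕ) : ℤ) ∣ (z : ℚ).num := by
    intro z hz hdvd
    have hnum : (z : ℚ).num ≠ 0 := by simpa using hz
    have h1 : Nat.nth (· ∈ P2) (c z) ≤ (z : ℚ).num.natAbs :=
      Nat.le_of_dvd (Int.natAbs_pos.mpr hnum) (Int.natCast_dvd.mp hdvd)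
    have h2 : c z ≤ Nat.nth (· ∈ P2) (c z) := (Nat.nth_strictMono hinf).le_apply
    have h3 : (z : ℚ).num.natAbs + 1 ≤ c z := Nat.right_le_pair _ _
    omega
  have hRg : ∀ p : P2, g p ≠ 0 → ¬ ((p : ℕ) : ℤ) ∣ (g p : ℚ).num := by
    intro p _ hdvd
    have h1 : ((q : ℚ) ^ (p : ℕ)).num = (q : ℤ) ^ (p : ℕ) := by
      simp [Rat.num_pow]
    have h2 : ((p : ℕ) : ℤ) ∣ (q : ℤ) ^ (p : ℕ) := h1 ▸ hdvd
    have h3 : (p : ℕ) ∣ q := (hprime _ p.2).dvd_of_dvd_pow (by exact_mod_cast h2)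
    exact hne _ p.2 ((Nat.prime_dvd_prime_iff_eq (hprime _ p.2) hq).mp h3)
  obtain ⟨σ, hσ, hR⟩ := Function.Embedding.schroeder_bernstein_of_rel hf hg
    (fun z p => z ≠ 0 → ¬ ((p : ℕ) : ℤ) ∣ (z : ℚ).num) hRf hRg
  refine ⟨σ, hσ, fun z hz ⟨y, hy, h⟩ => hR z hz ?_⟩
  exact dvd_num_of_eq_mul q hq (hprime _ (σ z).2) (hne _ (σ z).2) (hK ▸ hy) h
end
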